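/- Let G be the hosohedral-type group associated to pairs (m_1,ℓ_1),…,(m_h,ℓ_h) and let Δ be the common image of the s_j(0,ℓ_j). If α, β ∈ G satisfy α^n = β^n for some nonzero integer n, then either α and β are conjugate in G, or α and β are both periodic elements of G that are not conjugate (where an element x ∈ G is periodic if x^a = Δ^b for some nonzero integer a and some integer b). -/

import Mathlib

/-- The word `a_{j,i} a_{j,i+1} ⋯ a_{j,i+p-1}` (second indices mod `m j`) in the free group
on the disjoint union of the `ZMod (m j)`. -/
def hosoWord (h : ℕ) (m : Fin h → ℕ) (j : Fin h) (i : ZMod (m j)) (p : ℕ) :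
    FreeGroup (Σ j : Fin h, ZMod (m j)) :=
  ((List.range p).map (fun k => FreeGroup.of ⟨j, i + (k : ZMod (m j))⟩)).prod

/-- The defining relations of the hosohedral-type group associated to the pairs
`(m j, ℓ j)`: the circular relations `s_j(i, ℓ j) = s_j(i+1, ℓ j)` within each factor,
together with the identifications `s_j(0, ℓ j) = s_j'(0, ℓ j')` of the Garside elements. -/
def hosoRels (h : ℕ) (m ℓ : Fin h → ℕ) : Set (FreeGroup (Σ j : Fin h, ZMod (m j))) :=
  { r | (∃ (j : Fin h) (i : ZMod (m j)),
          r = hosoWord h m j i (ℓ j) * (hosoWord h m j (i + 1) (ℓ j))⁻¹) ∨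
        (∃ j j' : Fin h, r = hosoWord h m j 0 (ℓ j) * (hosoWord h m j' 0 (ℓ j'))⁻¹) }

/-- The hosohedral-type group associated to the pairs `(m j, ℓ j)`. -/
abbrev HosoGroup (h : ℕ) (m ℓ : Fin h → ℕ) := PresentedGroup (hosoRels h m ℓ)

/-- The generator `a_{j,i}` of the hosohedral-type group. -/
def hosoGen (h : ℕ) (m ℓ : Fin h → ℕ) (j : Fin h) (i : ZMod (m j)) : HosoGroup h m ℓ :=
  PresentedGroup.of ⟨j, i⟩

/-- The element `s_j(i,p) = a_{j,i} a_{j,i+1} ⋯ a_{j,i+p-1}` of the hosohedral-type group. -/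
def hosoS (h : ℕ) (m ℓ : Fin h → ℕ) (j : Fin h) (i : ZMod (m j)) (p : ℕ) :
    HosoGroup h m ℓ :=
  ((List.range p).map (fun k => hosoGen h m ℓ j (i + (k : ZMod (m j))))).prod

/-- The Garside element `Δ` of the hosohedral-type group, as the image of `s_j(0, ℓ j)`
(this is independent of `j` by the defining relations). -/
def hosoDelta (h : ℕ) (m ℓ : Fin h → ℕ) (j : Fin h) : HosoGroup h m ℓ :=
  hosoS h m ℓ j 0 (ℓ j)

/-- The `j`-th factor subgroup of the hosohedral-type group, generated by the
generators `a_{j,0}, …, a_{j, m_j - 1}`. -/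
def hosoFactor (h : ℕ) (m ℓ : Fin h → ℕ) (j : Fin h) : Subgroup (HosoGroup h m ℓ) :=
  Subgroup.closure (Set.range (hosoGen h m ℓ j))

/-- An element `x` of a hosohedral-type group is *periodic* if `x^a = Δ^b` for some nonzero
integer `a` and some integer `b`. -/
def HosoIsPeriodic (h : ℕ) (m ℓ : Fin h → ℕ) (hh : 0 < h) (x : HosoGroup h m ℓ) : Prop :=
  ∃ a : ℤ, a ≠ 0 ∧ ∃ b : ℤ, x ^ a = (hosoDelta h m ℓ ⟨0, hh⟩) ^ b

/-!
Let `ρ` act on the group by the shift `a_{j,i} ↦ a_{j,i+1}`. In the extension by `ρ`, the elements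
`x_j = a_{j,0} ρ` satisfy `x_j ^ ℓ_j = Δ ρ ^ ℓ_j`, and `ρ ^ m_j` commutes with `x_j`. Hence the
extension is a star-shaped amalgam of the abelian groups `⟨ρ, Δ⟩` and `⟨x_j, ρ ^ m_j⟩`. It maps to a
free-by-abelian group `F ⋊ (ℤ × ℚ)`, in which `ρ` and `Δ` become `(1, 0)` and `(0, 1)` and `x_j`
becomes a conjugate of `(1, 1 / ℓ_j)` by a free generator. Reduced forms in the amalgam become
reduced words in `F`, so this map is injective.

The hosohedral-type group has trivial `ℤ`-coordinate, so its degree in `ℚ` has free kernel. Moreover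
`Δ` has degree one and a power `z` of `Δ` is central. If `α ^ n = β ^ n`, choose `a ≠ 0` and `b`
such that `w = α ^ (n a) z ^ (-b)` has degree zero. If `w = 1`, then `α` and `β` are both periodic.
Otherwise `w` commutes with `α` and `β`, so `α⁻¹ β` lies in the free kernel, commutes with `w`, and
has a nonzero power in `⟨w⟩`. By uniqueness of roots in the kernel it commutes with `α`, and then
`(α⁻¹ β) ^ n = 1` forces `α = β`.
-/

/-! ### Roots over a free normal subgroup -/

section FreeGroups

theorem eq_of_commute_freeGroup_of {X : Type*} {x y : X}
    (h : Commute (FreeGroup.of x) (FreeGroup.of y)) : x = y := by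
  classical
  by_contra hxy
  have hword := congrArg FreeGroup.toWord h.eq
  simp [FreeGroup.toWord_mul, FreeGroup.reduce.cons, hxy, Ne.symm hxy] at hword

theorem isCyclic_of_isFreeGroup_of_isMulCommutative (G : Type*) [Group G] [IsFreeGroup G]
    [IsMulCommutative G] : IsCyclic G := by
  let e := IsFreeGroup.mulEquiv G
  have : Subsingleton (IsFreeGroup.Generators G) :=
    ⟨fun x y => eq_of_commute_freeGroup_of (e.injective (by simp only [map_mul, mul_comm']))⟩
  have : IsCyclic (FreeGroup (IsFreeGroup.Generators G)) := by
    rcases isEmpty_or_nonempty (IsFreeGroup.Generators G) with _ | ⟨⟨x⟩⟩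
    · infer_instance
    · have : Unique (IsFreeGroup.Generators G) := ⟨⟨x⟩, fun y => Subsingleton.elim y x⟩
      infer_instance
  exact isCyclic_of_surjective e e.surjective

theorem isMulTorsionFree_of_isFreeGroup (G : Type*) [Group G] [IsFreeGroup G] :
    IsMulTorsionFree G :=
  (IsFreeGroup.toFreeGroup G).injective.isMulTorsionFree (IsFreeGroup.toFreeGroup G).toMonoidHom

theorem isFreeGroup_of_injective {G H : Type*} [Group G] [Group H] [IsFreeGroup H]
    (f : G →* H) (hf : Function.Injective f) : IsFreeGroup G :=
  IsFreeGroup.ofMulEquiv (MonoidHom.ofInjective hf).symm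

theorem exists_zpow_eq_zpow_of_commute {G : Type*} [Group G] [IsFreeGroup G] {t w : G}
    (htw : Commute t w) (hw : w ≠ 1) : ∃ r : ℤ, r ≠ 0 ∧ ∃ i : ℤ, t ^ r = w ^ i := by
  let H := Subgroup.closure {t, w}
  have : IsMulCommutative H := Subgroup.isMulCommutative_closure <| by
    rintro x (rfl | rfl) y (rfl | rfl)
    exacts [rfl, htw, htw.symm, rfl]
  have := isCyclic_of_isFreeGroup_of_isMulCommutative H
  obtain ⟨c, hc⟩ := IsCyclic.exists_generator (α := H)
  have hpow : ∀ x ∈ ({t, w} : Set G), ∃ i : ℤ, (c : G) ^ i = x := fun x hx => by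
    obtain ⟨i, hi⟩ := hc ⟨x, Subgroup.subset_closure hx⟩
    exact ⟨i, by simpa using congrArg Subtype.val hi⟩
  obtain ⟨i, ht⟩ := hpow t (by simp)
  obtain ⟨r, hr⟩ := hpow w (by simp)
  refine ⟨r, ?_, i, by rw [← ht, ← hr, zpow_comm]⟩
  rintro rfl
  exact hw (hr.symm.trans (zpow_zero _))

end FreeGroups

section Roots

variable {Γ Q : Type*} [Group Γ] [Group Q]

theorem commute_of_commute_of_mem_normal {K : Subgroup Γ} [K.Normal] [IsFreeGroup K] {a t w : Γ}
    (ht : t ∈ K) (hw : w ∈ K) (hw1 : w ≠ 1) (htw : Commute t w) (haw : Commute a w) :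
    Commute a t := by
  have := isMulTorsionFree_of_isFreeGroup K
  obtain ⟨r, hr, i, hri⟩ := exists_zpow_eq_zpow_of_commute (t := (⟨t, ht⟩ : K)) (w := ⟨w, hw⟩)
    (Subtype.ext htw) (by simpa [Subtype.ext_iff] using hw1)
  have hri : t ^ r = w ^ i := by simpa using congrArg Subtype.val hri
  have hconj : (⟨a * t * a⁻¹, Subgroup.Normal.conj_mem ‹_› t ht a⟩ : K) = ⟨t, ht⟩ := by
    refine zpow_left_injective hr (Subtype.ext ?_)
    calc (a * t * a⁻¹) ^ r = a * w ^ i * a⁻¹ := by rw [conj_zpow, hri]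
      _ = t ^ r := by rw [(haw.zpow_right i).eq, mul_inv_cancel_right, hri]
  exact mul_inv_eq_iff_eq_mul.1 (congrArg Subtype.val hconj)

theorem eq_of_zpow_eq_of_commute [IsMulTorsionFree Q] (f : Γ →* Q) [IsFreeGroup f.ker]
    {a b w : Γ} {n : ℤ} (hn : n ≠ 0) (hab : a ^ n = b ^ n) (hw : w ∈ f.ker) (hw1 : w ≠ 1)
    (haw : Commute a w) (hbw : Commute b w) : a = b := by
  have := isMulTorsionFree_of_isFreeGroup f.ker
  have hf : f a = f b := zpow_left_injective hn (by simpa using congrArg f hab)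
  have hker : a⁻¹ * b ∈ f.ker := by simp [MonoidHom.mem_ker, hf]
  have hcomm : Commute a (a⁻¹ * b) :=
    commute_of_commute_of_mem_normal hker hw hw1 (haw.inv_left.mul_left hbw) haw
  have hpow : (a⁻¹ * b) ^ n = 1 := by
    have h := hcomm.mul_zpow n
    rwa [mul_inv_cancel_left, ← hab, left_eq_mul] at h
  have hone : (⟨a⁻¹ * b, hker⟩ : f.ker) = 1 :=
    (IsMulTorsionFree.zpow_eq_one_iff_left hn).1 (Subtype.ext hpow)
  exact inv_mul_eq_one.1 (congrArg Subtype.val hone)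

theorem multiplicative_rat_exists_zpow_eq_zpow (p : Multiplicative ℚ) {q : Multiplicative ℚ}
    (hq : q ≠ 1) : ∃ a : ℤ, a ≠ 0 ∧ ∃ b : ℤ, p ^ a = q ^ b := by
  have hq0 : q.toAdd ≠ 0 := hq
  obtain ⟨r, hr⟩ : ∃ r : ℚ, p.toAdd = r * q.toAdd := ⟨_, (div_mul_cancel₀ _ hq0).symm⟩
  refine ⟨r.den, by exact_mod_cast r.den_nz, r.num, Multiplicative.toAdd.injective ?_⟩
  simp only [toAdd_zpow, zsmul_eq_mul, hr, Int.cast_natCast]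
  rw [← mul_assoc, Rat.den_mul_eq_num]

/-- If `α` has no power in `⟨z⟩`, a suitable `α ^ a * z ^ (-b)` is a nontrivial element of the free
kernel which commutes with `α` and `β`. -/
theorem eq_or_zpow_eq_zpow_of_zpow_eq (f : Γ →* Multiplicative ℚ) [IsFreeGroup f.ker] {z : Γ}
    (hz : z ∈ Subgroup.center Γ) (hfz : f z ≠ 1) {α β : Γ} {n : ℤ} (hn : n ≠ 0)
    (hαβ : α ^ n = β ^ n) :
    α = β ∨ ∃ a : ℤ, a ≠ 0 ∧ ∃ b : ℤ, α ^ a = z ^ b ∧ β ^ a = z ^ b := by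
  obtain ⟨a, ha, b, hab⟩ := multiplicative_rat_exists_zpow_eq_zpow (f (α ^ n)) hfz
  let w := (α ^ n) ^ a * (z ^ b)⁻¹
  have hcomm : ∀ γ, γ ^ n = α ^ n → Commute γ w := fun γ hγ => by
    have hzb : Commute γ (z ^ b) := Subgroup.mem_center_iff.1 (zpow_mem hz b) γ
    have hγα : Commute γ (α ^ n) := hγ ▸ Commute.self_zpow γ n
    exact (hγα.zpow_right a).mul_right hzb.inv_right
  by_cases hw : w = 1
  · have hαz : (α ^ n) ^ a = z ^ b := mul_inv_eq_one.1 hw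
    exact Or.inr ⟨n * a, mul_ne_zero hn ha, b, by rw [zpow_mul, hαz], by rw [zpow_mul, ← hαβ, hαz]⟩
  · have hker : w ∈ f.ker := by simp [w, MonoidHom.mem_ker, ← hab]
    exact Or.inl (eq_of_zpow_eq_of_commute f hn hαβ hker hw (hcomm α rfl) (hcomm β hαβ.symm))

end Roots

/-! ### Star-shaped amalgams in free-by-abelian groups -/

section Star

open SemidirectProduct Pointwise

/-- The action of an abelian group `Q` on the free group over the disjoint union of the coset spaces
`Q ⧸ C j`, by translation of the basis. -/
def cosetAut {ι Q : Type*} [CommGroup Q] (C : ι → Subgroup Q) :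
    Q →* MulAut (FreeGroup (Σ j, Q ⧸ C j)) where
  toFun q := FreeGroup.freeGroupCongr (MulAction.toPerm q)
  map_one' := by
    ext x
    induction x using FreeGroup.induction_on <;> simp_all
  map_mul' p q := by
    ext x
    induction x using FreeGroup.induction_on <;> simp_all [mul_smul]

/-- The free-by-abelian group in which star-shaped amalgams with abelian vertex groups are
represented. -/
abbrev CosetProduct {ι Q : Type*} [CommGroup Q] (C : ι → Subgroup Q) :=
  FreeGroup (Σ j, Q ⧸ C j) ⋊[cosetAut C] Q

/-- The free generator `e_{j, q C_j}` attached to a coset, as an element of `CosetProduct C`. -/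
def cosetLetter {ι Q : Type*} [CommGroup Q] (C : ι → Subgroup Q) (j : ι) (q : Q) :
    CosetProduct C :=
  inl (FreeGroup.of ⟨j, (q : Q ⧸ C j)⟩)

/-- A syllable `y a` of an element of a star-shaped amalgam: `head = y` lies in the leaf group of
type `index`, and `tail = a` in the hub group. -/
structure Syllable (ι Γ : Type*) where
  index : ι
  head : Γ
  tail : Γ

/-- The element `y₁ a₁ y₂ a₂ ⋯` spelled by a list of syllables. -/
def syllableProd {ι Γ : Type*} [Group Γ] (l : List (Syllable ι Γ)) : Γ :=
  (l.map fun s => s.head * s.tail).prod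

/-- The free group word `e_{j₁,q} e_{j₁,q y₁}⁻¹ e_{j₂,q y₁ a₁} e_{j₂,q y₁ a₁ y₂}⁻¹ ⋯` traced out by
a list of syllables, starting at `q`. -/
def cosetWord {ι Q Γ : Type*} [CommGroup Q] [Group Γ] (C : ι → Subgroup Q) (π : Γ →* Q) :
    Q → List (Syllable ι Γ) → List ((Σ j, Q ⧸ C j) × Bool)
  | _, [] => []
  | q, s :: l => (⟨s.index, (q : Q ⧸ C s.index)⟩, true) ::
      (⟨s.index, ((q * π s.head : Q) : Q ⧸ C s.index)⟩, false) ::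
      cosetWord C π (q * π s.head * π s.tail) l

/-- A list of syllables is reduced if no head lies in the edge group of its type, and no tail
between two syllables of the same type lies in their edge group. The edge groups are given by
their images `C j` under `π`. -/
structure IsReducedSyllables {ι Q Γ : Type*} [CommGroup Q] [Group Γ] (C : ι → Subgroup Q)
    (π : Γ →* Q) (A : Subgroup Γ) (X : ι → Subgroup Γ) (l : List (Syllable ι Γ)) : Prop where
  head_mem : ∀ s ∈ l, s.head ∈ X s.index
  tail_mem : ∀ s ∈ l, s.tail ∈ A
  head_notMem : ∀ s ∈ l, π s.head ∉ C s.index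
  chain : l.IsChain fun s t => s.index = t.index → π s.tail ∉ C s.index

/-- The elements `a y₁ a₁ y₂ a₂ ⋯` with `a ∈ A` and a reduced list of syllables `yₖ aₖ`. -/
def reducedForms {ι Q Γ : Type*} [CommGroup Q] [Group Γ] (C : ι → Subgroup Q)
    (π : Γ →* Q) (A : Subgroup Γ) (X : ι → Subgroup Γ) : Set Γ :=
  {g | ∃ a ∈ A, ∃ l, IsReducedSyllables C π A X l ∧ a * syllableProd l = g}

variable {ι Q Γ : Type*} [CommGroup Q] [Group Γ] {C : ι → Subgroup Q}

theorem cosetAut_of (p q : Q) (j : ι) :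
    cosetAut C p (FreeGroup.of ⟨j, (q : Q ⧸ C j)⟩) =
      FreeGroup.of ⟨j, ((p * q : Q) : Q ⧸ C j)⟩ := by
  simp [cosetAut]

theorem inr_mul_cosetLetter (p q : Q) (j : ι) :
    inr p * cosetLetter C j q = cosetLetter C j (p * q) * inr p := by
  have h := inl_aut (φ := cosetAut C) p (FreeGroup.of ⟨j, (q : Q ⧸ C j)⟩)
  rw [map_inv, eq_mul_inv_iff_mul_eq] at h
  rw [cosetLetter, ← h, cosetAut_of, cosetLetter]

theorem inr_mul_cosetLetter_inv (p q : Q) (j : ι) :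
    inr p * (cosetLetter C j q)⁻¹ = (cosetLetter C j (p * q))⁻¹ * inr p := by
  rw [mul_inv_eq_iff_eq_mul, mul_assoc, inr_mul_cosetLetter, inv_mul_cancel_left]

theorem commute_inr_cosetLetter {p : Q} {j : ι} (hp : p ∈ C j) (q : Q) :
    Commute (inr p) (cosetLetter C j q) := by
  have hpq : ((p * q : Q) : Q ⧸ C j) = q := by
    rw [mul_comm, QuotientGroup.mk_mul_of_mem q hp]
  rw [commute_iff_eq, inr_mul_cosetLetter, cosetLetter, hpq, cosetLetter]

theorem conj_cosetLetter_right (j : ι) (q : Q) (g : CosetProduct C) :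
    (cosetLetter C j q * g * (cosetLetter C j q)⁻¹).right = g.right := by
  simp [cosetLetter]

variable {π : Γ →* Q} {A : Subgroup Γ} {X : ι → Subgroup Γ}

theorem syllableProd_cons (s : Syllable ι Γ) (l : List (Syllable ι Γ)) :
    syllableProd (s :: l) = s.head * s.tail * syllableProd l := by
  simp [syllableProd]

theorem isReducedSyllables_cons {s : Syllable ι Γ} {l : List (Syllable ι Γ)} :
    IsReducedSyllables C π A X (s :: l) ↔
      (s.head ∈ X s.index ∧ s.tail ∈ A ∧ π s.head ∉ C s.index) ∧
      (∀ t ∈ l.head?, s.index = t.index → π s.tail ∉ C s.index) ∧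
      IsReducedSyllables C π A X l := by
  constructor
  · rintro ⟨hX, hA, hC, hchain⟩
    rw [List.forall_mem_cons] at hX hA hC
    rw [List.isChain_cons] at hchain
    exact ⟨⟨hX.1, hA.1, hC.1⟩, hchain.1, hX.2, hA.2, hC.2, hchain.2⟩
  · rintro ⟨⟨hX, hA, hC⟩, hhead, h⟩
    exact ⟨List.forall_mem_cons.2 ⟨hX, h.head_mem⟩, List.forall_mem_cons.2 ⟨hA, h.tail_mem⟩,
      List.forall_mem_cons.2 ⟨hC, h.head_notMem⟩, List.isChain_cons.2 ⟨hhead, h.chain⟩⟩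

theorem IsReducedSyllables.isReduced_cosetWord {l : List (Syllable ι Γ)}
    (hl : IsReducedSyllables C π A X l) (q : Q) : FreeGroup.IsReduced (cosetWord C π q l) := by
  induction l generalizing q with
  | nil => simp [cosetWord]
  | cons s l ih =>
    obtain ⟨⟨-, -, hs⟩, hst, hl⟩ := isReducedSyllables_cons.1 hl
    have ih := ih hl (q * π s.head * π s.tail)
    have hne : (q : Q ⧸ C s.index) ≠ ((q * π s.head : Q) : Q ⧸ C s.index) := by
      rwa [Ne, QuotientGroup.eq, inv_mul_cancel_left]
    cases l with
    | nil => simpa [cosetWord] using hne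
    | cons t l =>
      rw [cosetWord] at ih
      rw [cosetWord, cosetWord, FreeGroup.isReduced_cons_cons, FreeGroup.isReduced_cons_cons]
      refine ⟨fun h => (hne (by simpa using h)).elim, fun h => ?_, ih⟩
      obtain ⟨i, y, a⟩ := s
      obtain ⟨j, z, b⟩ := t
      obtain ⟨rfl, h⟩ := Sigma.mk.inj h
      rw [heq_eq_eq, QuotientGroup.eq, inv_mul_cancel_left] at h
      exact (hst _ rfl rfl h).elim

theorem mul_mem_reducedForms_of_mem_hub {a g : Γ} (ha : a ∈ A)
    (hg : g ∈ reducedForms C π A X) : a * g ∈ reducedForms C π A X := by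
  obtain ⟨b, hb, l, hl, rfl⟩ := hg
  exact ⟨a * b, mul_mem ha hb, l, hl, mul_assoc _ _ _⟩

theorem mul_syllableProd_mem_reducedForms
    (hAX : ∀ j, A ⊓ (C j).comap π = X j ⊓ (C j).comap π) {j : ι} {y a : Γ} (hy : y ∈ X j)
    (ha : a ∈ A) {l : List (Syllable ι Γ)} (hl : IsReducedSyllables C π A X l)
    (hhead : ∀ t ∈ l.head?, j = t.index → π a ∉ C j) :
    y * (a * syllableProd l) ∈ reducedForms C π A X := by
  by_cases hyC : π y ∈ C j
  · have hyA : y ∈ A := ((hAX j).ge ⟨hy, hyC⟩).1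
    exact mul_mem_reducedForms_of_mem_hub hyA ⟨a, ha, l, hl, rfl⟩
  · refine ⟨1, one_mem A, ⟨j, y, a⟩ :: l, isReducedSyllables_cons.2 ⟨⟨hy, ha, hyC⟩, hhead, hl⟩, ?_⟩
    rw [one_mul, syllableProd_cons, mul_assoc]

theorem mul_mem_reducedForms_of_mem_leaf
    (hAX : ∀ j, A ⊓ (C j).comap π = X j ⊓ (C j).comap π) {j : ι} {y g : Γ} (hy : y ∈ X j)
    (hg : g ∈ reducedForms C π A X) : y * g ∈ reducedForms C π A X := by
  obtain ⟨a, ha, l, hl, rfl⟩ := hg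
  by_cases hhead : ∀ t ∈ l.head?, j = t.index → π a ∉ C j
  · exact mul_syllableProd_mem_reducedForms hAX hy ha hl hhead
  push Not at hhead
  obtain ⟨⟨_, z, b⟩, ht, rfl, haC⟩ := hhead
  obtain ⟨l, rfl⟩ := List.head?_eq_some_iff.1 ht
  obtain ⟨⟨hz, hb, -⟩, hhead, hl⟩ := isReducedSyllables_cons.1 hl
  have haX : a ∈ X _ := ((hAX _).le ⟨ha, haC⟩).1
  have hmerge := mul_syllableProd_mem_reducedForms hAX (mul_mem (mul_mem hy haX) hz) hb hl hhead
  simpa only [syllableProd_cons, mul_assoc] using hmerge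

theorem reducedForms_eq_univ (hgen : A ⊔ ⨆ j, X j = ⊤)
    (hAX : ∀ j, A ⊓ (C j).comap π = X j ⊓ (C j).comap π) :
    reducedForms C π A X = Set.univ := by
  have hstab : A ⊔ ⨆ j, X j ≤ MulAction.stabilizer Γ (reducedForms C π A X) := by
    simp only [sup_le_iff, iSup_le_iff, MulAction.le_stabilizer_iff_smul_le]
    constructor
    · rintro a ha _ ⟨g, hg, rfl⟩
      exact mul_mem_reducedForms_of_mem_hub ha hg
    · rintro j y hy _ ⟨g, hg, rfl⟩
      exact mul_mem_reducedForms_of_mem_leaf hAX hy hg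
  have hone : (1 : Γ) ∈ reducedForms C π A X :=
    ⟨1, one_mem A, [], ⟨by simp, by simp, by simp, by simp⟩, by simp [syllableProd]⟩
  refine Set.eq_univ_of_forall fun g => ?_
  have hg := MulAction.mem_stabilizer_iff.1 (hstab (hgen.ge (Subgroup.mem_top g)))
  rw [← hg]
  exact ⟨1, hone, mul_one g⟩

variable {Ψ : Γ →* CosetProduct C}

theorem inr_mul_map_syllableProd (hA : ∀ a ∈ A, Ψ a = inr (Ψ a).right)
    (hX : ∀ j, ∀ y ∈ X j, Ψ y = cosetLetter C j 1 * inr (Ψ y).right * (cosetLetter C j 1)⁻¹)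
    {l : List (Syllable ι Γ)} (hlX : ∀ s ∈ l, s.head ∈ X s.index) (hlA : ∀ s ∈ l, s.tail ∈ A)
    (q : Q) :
    inr q * Ψ (syllableProd l) = inl (FreeGroup.mk (cosetWord C (rightHom.comp Ψ) q l)) *
      inr (q * (Ψ (syllableProd l)).right) := by
  induction l generalizing q with
  | nil => simp [syllableProd, cosetWord, ← FreeGroup.one_eq_mk]
  | cons s l ih =>
    obtain ⟨j, y, a⟩ := s
    rw [List.forall_mem_cons] at hlX hlA
    set q₁ := q * (Ψ y).right with hq₁
    have hy : inr q * Ψ y = cosetLetter C j q * (cosetLetter C j q₁)⁻¹ * inr q₁ := by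
      rw [hX j y hlX.1, ← mul_assoc, ← mul_assoc, inr_mul_cosetLetter, mul_one,
        mul_assoc _ (inr q), ← map_mul, ← hq₁, mul_assoc, inr_mul_cosetLetter_inv, mul_one,
        mul_assoc]
    have ha : inr q₁ * Ψ a = inr (q₁ * (Ψ a).right) := by
      conv_lhs => rw [hA a hlA.1, ← map_mul]
    have hcons : (inl (FreeGroup.mk (cosetWord C (rightHom.comp Ψ) q (⟨j, y, a⟩ :: l))) :
        CosetProduct C) = cosetLetter C j q * (cosetLetter C j q₁)⁻¹ *
          inl (FreeGroup.mk (cosetWord C (rightHom.comp Ψ) (q₁ * (Ψ a).right) l)) := by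
      simp only [cosetLetter, ← map_inv, ← map_mul]
      simp [cosetWord, FreeGroup.of, FreeGroup.invRev, hq₁]
    calc inr q * Ψ (syllableProd (⟨j, y, a⟩ :: l))
        = inr q * Ψ y * Ψ a * Ψ (syllableProd l) := by
          rw [syllableProd_cons, map_mul, map_mul, ← mul_assoc, ← mul_assoc]
      _ = cosetLetter C j q * (cosetLetter C j q₁)⁻¹ *
            (inr (q₁ * (Ψ a).right) * Ψ (syllableProd l)) := by
          rw [hy, mul_assoc _ (inr q₁), ha, mul_assoc]
      _ = _ := by
          rw [ih hlX.2 hlA.2, hcons, mul_assoc _ (inl _)]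
          simp [syllableProd_cons, hq₁, mul_assoc]

theorem eq_nil_of_mk_cosetWord_eq_one {l : List (Syllable ι Γ)}
    (hl : IsReducedSyllables C π A X l) {q : Q}
    (h : FreeGroup.mk (cosetWord C π q l) = 1) : l = [] := by
  classical
  have hnil : cosetWord C π q l = [] := by
    rw [← (hl.isReduced_cosetWord q).reduce_eq, ← FreeGroup.toWord_mk, h, FreeGroup.toWord_one]
  cases l with
  | nil => rfl
  | cons s l => simp [cosetWord] at hnil

/-- The image of a reduced form determines a reduced word in the coset letters, which is trivial
only if the form has no syllables. -/
theorem injective_of_star (hgen : A ⊔ ⨆ j, X j = ⊤)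
    (hAX : ∀ j, A ⊓ (C j).comap (rightHom.comp Ψ) = X j ⊓ (C j).comap (rightHom.comp Ψ))
    (hA : ∀ a ∈ A, Ψ a = inr (Ψ a).right)
    (hX : ∀ j, ∀ y ∈ X j, Ψ y = cosetLetter C j 1 * inr (Ψ y).right * (cosetLetter C j 1)⁻¹)
    (hA1 : ∀ a ∈ A, Ψ a = 1 → a = 1) : Function.Injective Ψ := by
  rw [injective_iff_map_eq_one]
  intro g hg
  obtain ⟨a, ha, l, hl, rfl⟩ : g ∈ reducedForms C (rightHom.comp Ψ) A X := by
    rw [reducedForms_eq_univ hgen hAX]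
    exact Set.mem_univ g
  have hword := inr_mul_map_syllableProd hA hX hl.head_mem hl.tail_mem (Ψ a).right
  rw [← hA a ha, ← map_mul, hg] at hword
  have hone := congrArg SemidirectProduct.left hword
  obtain rfl : l = [] := eq_nil_of_mk_cosetWord_eq_one hl (by simpa using hone.symm)
  simp only [syllableProd, List.map_nil, List.prod_nil, mul_one] at hg ⊢
  exact hA1 a ha hg

end Star

/-! ### The star relations -/

section TwistedGen

variable {Γ : Type*} [Group Γ]

/-- The element `ρ ^ c x ρ ^ (-1 - c)`. If `x = a_{j,0} ρ` and conjugation by `ρ` translates second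
indices, this is the generator `a_{j,c}` of a hosohedral-type group. -/
def twistedGen (ρ x : Γ) (c : ℤ) : Γ :=
  ρ ^ c * x * ρ ^ (-1 - c)

theorem twistedGen_zero_mul (ρ x : Γ) : twistedGen ρ x 0 * ρ = x := by
  simp [twistedGen]

theorem twistedGen_add (ρ x : Γ) (c d : ℤ) :
    twistedGen ρ x (c + d) = ρ ^ d * twistedGen ρ x c * (ρ ^ d)⁻¹ := by
  rw [twistedGen, twistedGen, add_comm c, sub_add_eq_sub_sub, sub_right_comm, zpow_add,
    zpow_sub ρ (-1 - c)]
  simp only [mul_assoc]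

theorem map_twistedGen {Γ' : Type*} [Group Γ'] (f : Γ →* Γ') (ρ x : Γ) (c : ℤ) :
    f (twistedGen ρ x c) = twistedGen (f ρ) (f x) c := by
  simp only [twistedGen, map_mul, map_zpow]

theorem twistedGen_mem {ρ x : Γ} {H : Subgroup Γ} (hρ : ρ ∈ H) (hx : x ∈ H) (c : ℤ) :
    twistedGen ρ x c ∈ H :=
  mul_mem (mul_mem (zpow_mem hρ _) hx) (zpow_mem hρ _)

theorem twistedGen_congr {ρ x : Γ} {n : ℕ} (h : Commute (ρ ^ n) x) {c d : ℤ}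
    (hcd : (c : ZMod n) = d) : twistedGen ρ x c = twistedGen ρ x d := by
  obtain ⟨k, hk⟩ := (ZMod.intCast_eq_intCast_iff_dvd_sub c d n).1 hcd
  obtain rfl : d = n * k + c := by lia
  have hx : Commute (ρ ^ (n * k : ℤ)) x := by
    rw [zpow_mul, zpow_natCast]
    exact h.zpow_left k
  have hc : Commute (ρ ^ (n * k : ℤ)) (twistedGen ρ x c) :=
    ((Commute.zpow_zpow_self ρ _ _).mul_right hx).mul_right (Commute.zpow_zpow_self ρ _ _)
  rw [add_comm, twistedGen_add, hc.eq, mul_inv_cancel_right]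

theorem prod_map_range_twistedGen (ρ x : Γ) (c : ℤ) (p : ℕ) :
    ((List.range p).map fun k : ℕ => twistedGen ρ x (c + k)).prod =
      ρ ^ c * x ^ p * ρ ^ (-(c + p)) := by
  induction p with
  | zero => simp
  | succ p ih =>
    rw [List.prod_range_succ, ih, twistedGen, pow_succ, Nat.cast_succ, ← add_assoc c, neg_add_rev,
      ← sub_eq_add_neg, zpow_neg]
    group

end TwistedGen

section StarRelations

open SemidirectProduct

/-- The relations which define the extension of the hosohedral-type group of the pairs
`(m j, ℓ j)` by the shift, between the shift `ρ`, the Garside element `δ` and the elements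
`x j = a_{j,0} ρ`. They present a star-shaped amalgam of abelian groups: the hub group
`⟨ρ, δ⟩` and the leaf group `⟨x j, ρ ^ m j⟩` share the subgroup `⟨ρ ^ m j, δ ρ ^ ℓ j⟩`. -/
structure StarRelations {ι Γ : Type*} [Group Γ] (m ℓ : ι → ℕ) (ρ δ : Γ) (x : ι → Γ) : Prop where
  commute : Commute ρ δ
  commute_pow : ∀ j, Commute (ρ ^ m j) (x j)
  pow_eq : ∀ j, x j ^ ℓ j = δ * ρ ^ ℓ j

theorem mem_zpowers_sup_zpowers {Γ : Type*} [Group Γ] {x y g : Γ} (h : Commute x y) :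
    g ∈ Subgroup.zpowers x ⊔ Subgroup.zpowers y ↔ ∃ p q : ℤ, x ^ p * y ^ q = g := by
  have hrange := MonoidHom.noncommCoprod_range (zpowersHom Γ x) (zpowersHom Γ y)
    fun p q => h.zpow_zpow p.toAdd q.toAdd
  change g ∈ (zpowersHom Γ x).range ⊔ (zpowersHom Γ y).range ↔ _
  rw [← hrange, MonoidHom.mem_range]
  exact Prod.exists

namespace StarRelations

variable {ι Γ : Type*} [Group Γ] {m ℓ : ι → ℕ} {ρ δ : Γ} {x : ι → Γ}

theorem zpow_mul_zpow (hx : StarRelations m ℓ ρ δ x) (j : ι) (s t : ℤ) :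
    x j ^ (ℓ j * s) * (ρ ^ m j) ^ t = ρ ^ (m j * t + ℓ j * s) * δ ^ s := by
  have hs : (ρ ^ ℓ j) ^ s = ρ ^ (ℓ j * s) := by rw [← zpow_natCast, ← zpow_mul]
  have ht : (ρ ^ m j) ^ t = ρ ^ (m j * t) := by rw [← zpow_natCast, ← zpow_mul]
  rw [zpow_mul, zpow_natCast, hx.pow_eq, (hx.commute.symm.pow_right _).mul_zpow, hs, ht, mul_assoc,
    ← zpow_add, (hx.commute.zpow_zpow _ _).eq, add_comm]

theorem commute_pow_of_dvd (hx : StarRelations m ℓ ρ δ x) {N : ℕ} (hN : ∀ j, m j ∣ N) (j : ι) :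
    Commute (δ ^ N) (x j) := by
  have hρ : Commute ((ρ ^ ℓ j) ^ N) (x j) := by
    obtain ⟨k, hk⟩ := hN j
    rw [pow_right_comm, hk, pow_mul]
    exact ((hx.commute_pow j).pow_left k).pow_left (ℓ j)
  have hδρ : Commute (δ ^ N * (ρ ^ ℓ j) ^ N) (x j) := by
    rw [← (hx.commute.symm.pow_right _).mul_pow, ← hx.pow_eq]
    exact ((Commute.refl _).pow_left _).pow_left _
  simpa using hδρ.mul_left hρ.inv_left

theorem pow_mem_center (hx : StarRelations m ℓ ρ δ x)
    (hgen : Subgroup.closure (insert ρ (Set.range x)) = ⊤) {N : ℕ} (hN : ∀ j, m j ∣ N) :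
    δ ^ N ∈ Subgroup.center Γ := by
  rw [← Subgroup.centralizer_univ, ← Subgroup.coe_top, ← hgen, Subgroup.centralizer_closure,
    Subgroup.mem_centralizer_iff]
  rintro _ (rfl | ⟨j, rfl⟩)
  · exact hx.commute.pow_right N
  · exact (hx.commute_pow_of_dvd hN j).symm

theorem prod_map_range_twistedGen (hx : StarRelations m ℓ ρ δ x) (j : ι) (c : ℤ) :
    ((List.range (ℓ j)).map fun k : ℕ => twistedGen ρ (x j) (c + k)).prod = δ := by
  rw [_root_.prod_map_range_twistedGen, hx.pow_eq, ← mul_assoc, (hx.commute.zpow_left c).eq,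
    ← zpow_natCast, mul_assoc, mul_assoc, ← zpow_add, ← zpow_add]
  simp

end StarRelations

/-- The image of the edge group `⟨ρ ^ m j, δ ρ ^ ℓ j⟩` under `ρ ↦ (1, 0)`, `δ ↦ (0, 1)`. -/
def starEdge {ι : Type*} (m ℓ : ι → ℕ) (j : ι) : Subgroup (Multiplicative (ℤ × ℚ)) :=
  Subgroup.closure {Multiplicative.ofAdd ((m j : ℤ), (0 : ℚ)), Multiplicative.ofAdd ((ℓ j : ℤ), 1)}

/-- The element `(p, s)` of the abelian factor of the free-by-abelian group
`CosetProduct (starEdge m ℓ)`. The images of `ρ` and `δ` are `(1, 0)` and `(0, 1)`. -/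
def starInr {ι : Type*} (m ℓ : ι → ℕ) (p : ℤ) (s : ℚ) : CosetProduct (starEdge m ℓ) :=
  inr (Multiplicative.ofAdd (p, s))

/-- The image of `x j` in `CosetProduct (starEdge m ℓ)`, an `ℓ j`-th root of the image of
`δ ρ ^ ℓ j`. -/
def starRoot {ι : Type*} (m ℓ : ι → ℕ) (j : ι) : CosetProduct (starEdge m ℓ) :=
  cosetLetter (starEdge m ℓ) j 1 * starInr m ℓ 1 (ℓ j : ℚ)⁻¹ * (cosetLetter (starEdge m ℓ) j 1)⁻¹

variable {ι : Type*} {m ℓ : ι → ℕ}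

theorem ofAdd_mem_starEdge_iff {j : ι} {p : ℤ} {s : ℚ} :
    Multiplicative.ofAdd (p, s) ∈ starEdge m ℓ j ↔ ∃ t u : ℤ, m j * t + ℓ j * u = p ∧ u = s := by
  simp [starEdge, Subgroup.mem_closure_pair, ← ofAdd_zsmul, ← ofAdd_add, mul_comm]

theorem starInr_mul (p q : ℤ) (s t : ℚ) :
    starInr m ℓ p s * starInr m ℓ q t = starInr m ℓ (p + q) (s + t) :=
  (map_mul inr _ _).symm

theorem starInr_zpow (p : ℤ) (s : ℚ) (k : ℤ) :
    starInr m ℓ p s ^ k = starInr m ℓ (k * p) (k * s) := by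
  rw [starInr, ← map_zpow, ← ofAdd_zsmul, Prod.smul_mk, smul_eq_mul, zsmul_eq_mul, starInr]

theorem commute_starInr (p q : ℤ) (s t : ℚ) : Commute (starInr m ℓ p s) (starInr m ℓ q t) :=
  (Commute.all _ _).map inr

theorem starInr_right (p : ℤ) (s : ℚ) : (starInr m ℓ p s).right = Multiplicative.ofAdd (p, s) :=
  rfl

theorem commute_starInr_cosetLetter {j : ι} {p : ℤ} {s : ℚ}
    (h : ∃ t u : ℤ, m j * t + ℓ j * u = p ∧ u = s) :
    Commute (starInr m ℓ p s) (cosetLetter (starEdge m ℓ) j 1) :=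
  commute_inr_cosetLetter (ofAdd_mem_starEdge_iff.2 h) 1

theorem starRoot_zpow (j : ι) (u : ℤ) :
    starRoot m ℓ j ^ u = cosetLetter (starEdge m ℓ) j 1 * starInr m ℓ u (u / ℓ j) *
      (cosetLetter (starEdge m ℓ) j 1)⁻¹ := by
  rw [starRoot, conj_zpow, starInr_zpow, mul_one, div_eq_mul_inv]

theorem starRelations_starRoot (hℓ : ∀ j, 0 < ℓ j) :
    StarRelations m ℓ (starInr m ℓ 1 0) (starInr m ℓ 0 1) (starRoot m ℓ) where
  commute := commute_starInr _ _ _ _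
  commute_pow j := by
    have hletter : Commute (starInr m ℓ (m j) 0) (cosetLetter (starEdge m ℓ) j 1) :=
      commute_starInr_cosetLetter ⟨1, 0, by simp⟩
    rw [← zpow_natCast, starInr_zpow, mul_one, mul_zero]
    exact (hletter.mul_right (commute_starInr _ _ _ _)).mul_right hletter.inv_right
  pow_eq j := by
    have hletter : Commute (starInr m ℓ (ℓ j) 1) (cosetLetter (starEdge m ℓ) j 1) :=
      commute_starInr_cosetLetter ⟨0, 1, by simp⟩
    have hℓj : (ℓ j : ℚ) ≠ 0 := Nat.cast_ne_zero.2 (hℓ j).ne'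
    rw [← zpow_natCast, ← zpow_natCast, starRoot_zpow, Int.cast_natCast, div_self hℓj,
      ← hletter.eq, mul_inv_cancel_right, starInr_zpow, starInr_mul]
    simp

section Injective

variable {Γ : Type*} [Group Γ] {ρ δ : Γ} {x : ι → Γ} {Ψ : Γ →* CosetProduct (starEdge m ℓ)}

theorem map_zpow_mul_zpow_hub (hρ : Ψ ρ = starInr m ℓ 1 0) (hδ : Ψ δ = starInr m ℓ 0 1)
    (p q : ℤ) : Ψ (ρ ^ p * δ ^ q) = starInr m ℓ p q := by
  rw [map_mul, map_zpow, map_zpow, hρ, hδ, starInr_zpow, starInr_zpow, starInr_mul]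
  simp

theorem map_zpow_mul_zpow_leaf (hρ : Ψ ρ = starInr m ℓ 1 0) {j : ι}
    (hx : Ψ (x j) = starRoot m ℓ j) (u v : ℤ) :
    Ψ (x j ^ u * (ρ ^ m j) ^ v) = cosetLetter (starEdge m ℓ) j 1 *
      starInr m ℓ (u + m j * v) (u / ℓ j) * (cosetLetter (starEdge m ℓ) j 1)⁻¹ := by
  have hletter : Commute (starInr m ℓ (m j * v) 0) (cosetLetter (starEdge m ℓ) j 1) :=
    commute_starInr_cosetLetter ⟨v, 0, by simp⟩
  have hpow : Ψ ((ρ ^ m j) ^ v) = starInr m ℓ (m j * v) 0 := by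
    rw [← zpow_natCast, ← zpow_mul, map_zpow, hρ, starInr_zpow, mul_one, mul_zero]
  rw [map_mul, hpow, map_zpow, hx, starRoot_zpow, mul_assoc, ← hletter.inv_right.eq, ← mul_assoc,
    mul_assoc _ (starInr ..) (starInr ..), starInr_mul, add_zero]

theorem StarRelations.hub_inf_comap_eq_leaf_inf_comap (hrel : StarRelations m ℓ ρ δ x)
    (hℓ : ∀ j, 0 < ℓ j) (hρ : Ψ ρ = starInr m ℓ 1 0) (hδ : Ψ δ = starInr m ℓ 0 1) {j : ι}
    (hx : Ψ (x j) = starRoot m ℓ j) :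
    (Subgroup.zpowers ρ ⊔ Subgroup.zpowers δ) ⊓ (starEdge m ℓ j).comap (rightHom.comp Ψ) =
      (Subgroup.zpowers (x j) ⊔ Subgroup.zpowers (ρ ^ m j)) ⊓
        (starEdge m ℓ j).comap (rightHom.comp Ψ) := by
  ext g
  simp only [Subgroup.mem_inf, Subgroup.mem_comap, MonoidHom.comp_apply, rightHom_eq_right]
  refine and_congr_left fun hg => ?_
  rw [mem_zpowers_sup_zpowers hrel.commute, mem_zpowers_sup_zpowers (hrel.commute_pow j).symm]
  constructor
  · rintro ⟨p, q, rfl⟩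
    rw [map_zpow_mul_zpow_hub hρ hδ, starInr_right, ofAdd_mem_starEdge_iff] at hg
    obtain ⟨t, u, rfl, hu⟩ := hg
    obtain rfl : u = q := Int.cast_injective hu
    exact ⟨_, _, hrel.zpow_mul_zpow j u t⟩
  · rintro ⟨u, v, rfl⟩
    rw [map_zpow_mul_zpow_leaf hρ hx, conj_cosetLetter_right, starInr_right,
      ofAdd_mem_starEdge_iff] at hg
    obtain ⟨-, s, -, hs⟩ := hg
    rw [eq_div_iff (Nat.cast_ne_zero.2 (hℓ j).ne'), mul_comm] at hs
    obtain rfl : ℓ j * s = u := by exact_mod_cast hs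
    exact ⟨_, _, (hrel.zpow_mul_zpow j s v).symm⟩

theorem StarRelations.injective (hrel : StarRelations m ℓ ρ δ x) (hℓ : ∀ j, 0 < ℓ j)
    (hgen : Subgroup.closure (insert ρ (Set.range x)) = ⊤)
    (hρ : Ψ ρ = starInr m ℓ 1 0) (hδ : Ψ δ = starInr m ℓ 0 1)
    (hx : ∀ j, Ψ (x j) = starRoot m ℓ j) : Function.Injective Ψ := by
  refine injective_of_star (A := Subgroup.zpowers ρ ⊔ Subgroup.zpowers δ)
    (X := fun j => Subgroup.zpowers (x j) ⊔ Subgroup.zpowers (ρ ^ m j)) ?_ (fun j => ?_) ?_ ?_ ?_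
  · rw [eq_top_iff, ← hgen, Subgroup.closure_le, Set.insert_subset_iff, Set.range_subset_iff]
    exact ⟨Subgroup.mem_sup_left (Subgroup.mem_sup_left (Subgroup.mem_zpowers ρ)), fun j =>
      Subgroup.mem_sup_right <| Subgroup.mem_iSup_of_mem j <|
        Subgroup.mem_sup_left (Subgroup.mem_zpowers (x j))⟩
  · exact hrel.hub_inf_comap_eq_leaf_inf_comap hℓ hρ hδ (hx j)
  · intro a ha
    obtain ⟨p, q, rfl⟩ := (mem_zpowers_sup_zpowers hrel.commute).1 ha
    rw [map_zpow_mul_zpow_hub hρ hδ, starInr_right, starInr]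
  · intro j y hy
    obtain ⟨u, v, rfl⟩ := (mem_zpowers_sup_zpowers (hrel.commute_pow j).symm).1 hy
    rw [map_zpow_mul_zpow_leaf hρ (hx j), conj_cosetLetter_right, starInr_right, starInr]
  · intro a ha ha1
    obtain ⟨p, q, rfl⟩ := (mem_zpowers_sup_zpowers hrel.commute).1 ha
    rw [map_zpow_mul_zpow_hub hρ hδ, ← map_one inr] at ha1
    have hpq : (p, (q : ℚ)) = 0 := Multiplicative.ofAdd.injective (inr_injective ha1)
    obtain ⟨rfl, hq⟩ := Prod.mk.inj hpq
    obtain rfl : q = 0 := by exact_mod_cast hq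
    simp

end Injective

end StarRelations

/-! ### Hosohedral-type groups -/

section Hoso

open SemidirectProduct

variable {h : ℕ} {m ℓ : Fin h → ℕ} {Γ : Type*} [Group Γ]

/-- The homomorphism out of a hosohedral-type group with prescribed values on the generators
`a_{j,i}`. -/
def hosoLift (f : (Σ j : Fin h, ZMod (m j)) → Γ)
    (hf : ∀ j i j' i', ((List.range (ℓ j)).map fun k : ℕ => f ⟨j, i + (k : ZMod (m j))⟩).prod =
      ((List.range (ℓ j')).map fun k : ℕ => f ⟨j', i' + (k : ZMod (m j'))⟩).prod) :
    HosoGroup h m ℓ →* Γ :=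
  PresentedGroup.toGroup (f := f) <| by
    have hword : ∀ j i, FreeGroup.lift f (hosoWord h m j i (ℓ j)) =
        ((List.range (ℓ j)).map fun k : ℕ => f ⟨j, i + (k : ZMod (m j))⟩).prod := by
      simp [hosoWord, map_list_prod, Function.comp_def]
    rintro r (⟨j, i, rfl⟩ | ⟨j, j', rfl⟩)
    · rw [map_mul, map_inv, hword, hword, hf j i j (i + 1), mul_inv_cancel]
    · rw [map_mul, map_inv, hword, hword, hf j 0 j' 0, mul_inv_cancel]

theorem hosoLift_hosoGen (f : (Σ j : Fin h, ZMod (m j)) → Γ)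
    (hf : ∀ j i j' i', ((List.range (ℓ j)).map fun k : ℕ => f ⟨j, i + (k : ZMod (m j))⟩).prod =
      ((List.range (ℓ j')).map fun k : ℕ => f ⟨j', i' + (k : ZMod (m j'))⟩).prod)
    (j : Fin h) (i : ZMod (m j)) :
    hosoLift (ℓ := ℓ) f hf (hosoGen h m ℓ j i) = f ⟨j, i⟩ :=
  PresentedGroup.toGroup.of _

theorem hosoGroup_hom_ext {f g : HosoGroup h m ℓ →* Γ}
    (hfg : ∀ j (c : ℤ), f (hosoGen h m ℓ j c) = g (hosoGen h m ℓ j c)) : f = g := by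
  refine PresentedGroup.ext fun ⟨j, i⟩ => ?_
  obtain ⟨c, rfl⟩ := ZMod.intCast_surjective i
  exact hfg j c

/-- In the definition of `hosoS` the index `k` runs over `ZMod (m j)`, the list `List.range p` being
coerced elementwise. -/
theorem hosoS_eq_prod (j : Fin h) (i : ZMod (m j)) (p : ℕ) :
    hosoS h m ℓ j i p =
      ((List.range p).map fun k : ℕ => hosoGen h m ℓ j (i + (k : ZMod (m j)))).prod := by
  rw [← List.flatMap_pure_eq_map]
  simp only [hosoS, List.bind_eq_flatMap, List.map_flatMap]
  rfl

theorem mk_hosoWord (j : Fin h) (i : ZMod (m j)) (p : ℕ) :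
    PresentedGroup.mk (hosoRels h m ℓ) (hosoWord h m j i p) = hosoS h m ℓ j i p := by
  rw [hosoWord, hosoS_eq_prod, map_list_prod, List.map_map]
  rfl

theorem hosoS_eq_hosoDelta (j : Fin h) (c : ℤ) (j' : Fin h) :
    hosoS h m ℓ j c (ℓ j) = hosoDelta h m ℓ j' := by
  have hsucc : ∀ i, hosoS h m ℓ j i (ℓ j) = hosoS h m ℓ j (i + 1) (ℓ j) := fun i => by
    rw [← mk_hosoWord, ← mk_hosoWord]
    exact PresentedGroup.mk_eq_mk_of_mul_inv_mem (Or.inl ⟨j, i, rfl⟩)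
  induction c with
  | zero =>
    rw [Int.cast_zero, hosoDelta, ← mk_hosoWord, ← mk_hosoWord]
    exact PresentedGroup.mk_eq_mk_of_mul_inv_mem (Or.inr ⟨j, j', rfl⟩)
  | succ c ih => rw [Int.cast_add, Int.cast_one, ← hsucc, ih]
  | pred c ih => rw [← ih, hsucc, Int.cast_sub, Int.cast_one, sub_add_cancel]

/-- The endomorphism `a_{j,i} ↦ a_{j,i+c}` of a hosohedral-type group. -/
def hosoShift (c : ℤ) : HosoGroup h m ℓ →* HosoGroup h m ℓ :=
  hosoLift (fun x => hosoGen h m ℓ x.1 (x.2 + c)) fun j i j' i' => by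
    obtain ⟨d, rfl⟩ := ZMod.intCast_surjective i
    obtain ⟨d', rfl⟩ := ZMod.intCast_surjective i'
    have hprod : ∀ j (d : ℤ), ((List.range (ℓ j)).map fun k : ℕ =>
        hosoGen h m ℓ j (d + (k : ZMod (m j)) + c)).prod = hosoS h m ℓ j (d + c : ℤ) (ℓ j) :=
      fun j d => by simp only [hosoS_eq_prod, Int.cast_add, add_right_comm _ (c : ZMod (m j))]
    rw [hprod, hprod, hosoS_eq_hosoDelta j _ j, hosoS_eq_hosoDelta j' _ j]

theorem hosoShift_hosoGen (c : ℤ) (j : Fin h) (i : ZMod (m j)) :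
    hosoShift c (hosoGen h m ℓ j i) = hosoGen h m ℓ j (i + c) :=
  hosoLift_hosoGen _ _ j i

theorem hosoShift_zero : hosoShift 0 = MonoidHom.id (HosoGroup h m ℓ) :=
  hosoGroup_hom_ext fun j i => by simp [hosoShift_hosoGen]

theorem hosoShift_add (c d : ℤ) :
    (hosoShift (c + d) : HosoGroup h m ℓ →* HosoGroup h m ℓ) =
      (hosoShift c).comp (hosoShift d) :=
  hosoGroup_hom_ext fun j i => by
    rw [MonoidHom.comp_apply, hosoShift_hosoGen, hosoShift_hosoGen, hosoShift_hosoGen,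
      add_comm c d, Int.cast_add, add_assoc]

theorem hosoShift_hosoDelta (c : ℤ) (j : Fin h) :
    hosoShift c (hosoDelta h m ℓ j) = hosoDelta h m ℓ j := by
  refine Eq.trans ?_ (hosoS_eq_hosoDelta j c j)
  simp only [hosoDelta, hosoS_eq_prod, map_list_prod, List.map_map, Function.comp_def,
    hosoShift_hosoGen, zero_add, add_comm (c : ZMod (m j))]

/-- The action of an infinite cyclic group on a hosohedral-type group by shifts. -/
def hosoShiftAut (h : ℕ) (m ℓ : Fin h → ℕ) : Multiplicative ℤ →* MulAut (HosoGroup h m ℓ) where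
  toFun c := MonoidHom.toMulEquiv (hosoShift c.toAdd) (hosoShift (-c.toAdd))
    (by rw [← hosoShift_add, neg_add_cancel, hosoShift_zero])
    (by rw [← hosoShift_add, add_neg_cancel, hosoShift_zero])
  map_one' := by
    ext x
    exact DFunLike.congr_fun hosoShift_zero x
  map_mul' c d := by
    ext x
    exact DFunLike.congr_fun (hosoShift_add c.toAdd d.toAdd) x

theorem hosoShiftAut_apply (c : Multiplicative ℤ) (x : HosoGroup h m ℓ) :
    hosoShiftAut h m ℓ c x = hosoShift c.toAdd x :=
  rfl

/-- The extension of a hosohedral-type group by the shift. -/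
abbrev HosoExt (h : ℕ) (m ℓ : Fin h → ℕ) :=
  HosoGroup h m ℓ ⋊[hosoShiftAut h m ℓ] Multiplicative ℤ

/-- The shift, as an element of `HosoExt h m ℓ`. -/
def hosoRho (h : ℕ) (m ℓ : Fin h → ℕ) : HosoExt h m ℓ :=
  inr (Multiplicative.ofAdd 1)

/-- The element `a_{j,0} ρ` of `HosoExt h m ℓ`, an `ℓ j`-th root of `Δ ρ ^ ℓ j`. -/
def hosoRoot (h : ℕ) (m ℓ : Fin h → ℕ) (j : Fin h) : HosoExt h m ℓ :=
  inl (hosoGen h m ℓ j 0) * hosoRho h m ℓ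

theorem hosoRho_zpow (c : ℤ) : hosoRho h m ℓ ^ c = inr (Multiplicative.ofAdd c) := by
  rw [hosoRho, ← map_zpow, ← ofAdd_zsmul, smul_eq_mul, mul_one]

theorem inl_hosoShift (c : ℤ) (x : HosoGroup h m ℓ) :
    (inl (hosoShift c x) : HosoExt h m ℓ) =
      hosoRho h m ℓ ^ c * inl x * (hosoRho h m ℓ ^ c)⁻¹ := by
  rw [hosoRho_zpow, ← map_inv, ← inl_aut, hosoShiftAut_apply, toAdd_ofAdd]

theorem inl_hosoGen (j : Fin h) (c : ℤ) :
    (inl (hosoGen h m ℓ j c) : HosoExt h m ℓ) =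
      twistedGen (hosoRho h m ℓ) (hosoRoot h m ℓ j) c := by
  have hzero : inl (hosoGen h m ℓ j 0) = twistedGen (hosoRho h m ℓ) (hosoRoot h m ℓ j) 0 :=
    mul_right_cancel (twistedGen_zero_mul _ _).symm
  rw [← zero_add c, twistedGen_add, ← hzero, ← inl_hosoShift, hosoShift_hosoGen, zero_add, zero_add]

theorem starRelations_hosoExt (j₀ : Fin h) :
    StarRelations m ℓ (hosoRho h m ℓ) (inl (hosoDelta h m ℓ j₀)) (hosoRoot h m ℓ) where
  commute := by
    have hshift := inl_hosoShift 1 (hosoDelta h m ℓ j₀)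
    rw [hosoShift_hosoDelta, zpow_one, eq_mul_inv_iff_mul_eq] at hshift
    exact hshift.symm
  commute_pow j := by
    have hshift := inl_hosoShift (m j) (hosoGen h m ℓ j 0)
    rw [hosoShift_hosoGen, Int.cast_natCast, ZMod.natCast_self, add_zero, zpow_natCast,
      eq_mul_inv_iff_mul_eq] at hshift
    exact Commute.mul_right hshift.symm (Commute.pow_self _ _)
  pow_eq j := by
    have hprod := prod_map_range_twistedGen (hosoRho h m ℓ) (hosoRoot h m ℓ j) 0 (ℓ j)
    rw [zpow_zero, one_mul, zero_add, zpow_neg, zpow_natCast, eq_mul_inv_iff_mul_eq] at hprod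
    rw [← hprod, ← hosoS_eq_hosoDelta j 0 j₀, hosoS_eq_prod, map_list_prod, List.map_map]
    simp only [Function.comp_def, ← inl_hosoGen, Int.cast_add, Int.cast_natCast]

theorem closure_hosoRho_hosoRoot :
    Subgroup.closure (insert (hosoRho h m ℓ) (Set.range (hosoRoot h m ℓ))) = ⊤ := by
  set K := Subgroup.closure (insert (hosoRho h m ℓ) (Set.range (hosoRoot h m ℓ)))
  have hρ : hosoRho h m ℓ ∈ K := Subgroup.subset_closure (Set.mem_insert _ _)
  have hx : ∀ j, hosoRoot h m ℓ j ∈ K := fun j =>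
    Subgroup.subset_closure (Set.mem_insert_of_mem _ (Set.mem_range_self j))
  have hinl : ∀ g, inl g ∈ K := PresentedGroup.generated_by _ (K.comap inl) fun ⟨j, i⟩ => by
    obtain ⟨c, rfl⟩ := ZMod.intCast_surjective i
    change inl (hosoGen h m ℓ j c) ∈ K
    rw [inl_hosoGen]
    exact twistedGen_mem hρ (hx j) c
  refine (Subgroup.eq_top_iff' K).2 fun g => ?_
  rw [← inl_left_mul_inr_right g, ← ofAdd_toAdd g.right, ← hosoRho_zpow]
  exact mul_mem (hinl _) (zpow_mem hρ _)

theorem hosoDelta_pow_mem_center (j₀ : Fin h) {N : ℕ} (hN : ∀ j, m j ∣ N) :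
    hosoDelta h m ℓ j₀ ^ N ∈ Subgroup.center (HosoGroup h m ℓ) := by
  have hcenter := (starRelations_hosoExt (ℓ := ℓ) j₀).pow_mem_center closure_hosoRho_hosoRoot hN
  refine Subgroup.mem_center_iff.2 fun g => inl_injective (φ := hosoShiftAut h m ℓ) ?_
  simpa only [map_mul, map_pow] using Subgroup.mem_center_iff.1 hcenter (inl g)

namespace StarRelations

variable {ρ δ : Γ} {x : Fin h → Γ}

theorem prod_twistedGen_cast (hx : StarRelations m ℓ ρ δ x) (j : Fin h) (i : ZMod (m j)) :
    ((List.range (ℓ j)).map fun k : ℕ =>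
      twistedGen ρ (x j) (i + (k : ZMod (m j))).cast).prod = δ := by
  rw [← hx.prod_map_range_twistedGen j i.cast]
  congr 2 with k
  exact twistedGen_congr (hx.commute_pow j) (by simp)

/-- The homomorphism from a hosohedral-type group given by elements which satisfy the star
relations. -/
def hosoLift (hx : StarRelations m ℓ ρ δ x) : HosoGroup h m ℓ →* Γ :=
  _root_.hosoLift (fun y => twistedGen ρ (x y.1) y.2.cast) fun j i j' i' => by
    rw [hx.prod_twistedGen_cast, hx.prod_twistedGen_cast]

theorem hosoLift_hosoGen (hx : StarRelations m ℓ ρ δ x) (j : Fin h) (c : ℤ) :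
    hx.hosoLift (hosoGen h m ℓ j c) = twistedGen ρ (x j) c :=
  (_root_.hosoLift_hosoGen _ _ _ _).trans <|
    twistedGen_congr (hx.commute_pow j) (ZMod.intCast_zmod_cast _)

theorem hosoLift_hosoDelta (hx : StarRelations m ℓ ρ δ x) (j : Fin h) :
    hx.hosoLift (hosoDelta h m ℓ j) = δ := by
  refine Eq.trans ?_ (hx.prod_map_range_twistedGen j 0)
  simp only [hosoDelta, hosoS_eq_prod, map_list_prod, List.map_map, Function.comp_def,
    ← hx.hosoLift_hosoGen, Int.cast_add, Int.cast_zero, Int.cast_natCast]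

/-- The extension of `StarRelations.hosoLift` which maps the shift to `ρ`. -/
def hosoExtLift (hx : StarRelations m ℓ ρ δ x) : HosoExt h m ℓ →* Γ :=
  SemidirectProduct.lift hx.hosoLift (zpowersHom Γ ρ) fun g => hosoGroup_hom_ext fun j c => by
    simp only [MonoidHom.comp_apply, MulEquiv.coe_toMonoidHom, MulAut.conj_apply, zpowersHom_apply,
      hosoShiftAut_apply, hosoShift_hosoGen, ← Int.cast_add, hx.hosoLift_hosoGen, twistedGen_add]

theorem hosoExtLift_inl (hx : StarRelations m ℓ ρ δ x) (g : HosoGroup h m ℓ) :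
    hx.hosoExtLift (inl g) = hx.hosoLift g :=
  lift_inl _ _ _ _

theorem hosoExtLift_hosoRho (hx : StarRelations m ℓ ρ δ x) :
    hx.hosoExtLift (hosoRho h m ℓ) = ρ := by
  rw [hosoExtLift, hosoRho, lift_inr, zpowersHom_apply, toAdd_ofAdd, zpow_one]

theorem hosoExtLift_hosoRoot (hx : StarRelations m ℓ ρ δ x) (j : Fin h) :
    hx.hosoExtLift (hosoRoot h m ℓ j) = x j := by
  rw [hosoRoot, map_mul, hosoExtLift_inl, hosoExtLift_hosoRho, ← Int.cast_zero, hosoLift_hosoGen,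
    twistedGen_zero_mul]

end StarRelations

/-- The homomorphism from a hosohedral-type group to the free-by-abelian group
`CosetProduct (starEdge m ℓ)`. -/
def hosoToCosetProduct (hℓ : ∀ j, 0 < ℓ j) : HosoGroup h m ℓ →* CosetProduct (starEdge m ℓ) :=
  (starRelations_starRoot hℓ).hosoLift

theorem hosoToCosetProduct_injective (hℓ : ∀ j, 0 < ℓ j) (j₀ : Fin h) :
    Function.Injective (hosoToCosetProduct (m := m) hℓ) := by
  have hstar := starRelations_starRoot (m := m) hℓ
  have hδ : hstar.hosoExtLift (inl (hosoDelta h m ℓ j₀)) = starInr m ℓ 0 1 :=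
    (hstar.hosoExtLift_inl _).trans (hstar.hosoLift_hosoDelta j₀)
  have hinj : Function.Injective hstar.hosoExtLift :=
    (starRelations_hosoExt j₀).injective hℓ closure_hosoRho_hosoRoot hstar.hosoExtLift_hosoRho hδ
      hstar.hosoExtLift_hosoRoot
  intro g g' hg
  refine inl_injective (hinj ?_)
  rwa [hstar.hosoExtLift_inl, hstar.hosoExtLift_inl]

theorem fst_hosoToCosetProduct (hℓ : ∀ j, 0 < ℓ j) (g : HosoGroup h m ℓ) :
    (hosoToCosetProduct hℓ g).right.toAdd.1 = 0 := by
  have htrivial : (AddMonoidHom.fst ℤ ℚ).toMultiplicative.comp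
      (rightHom.comp (hosoToCosetProduct (m := m) hℓ)) = 1 := by
    refine hosoGroup_hom_ext fun j c => ?_
    rw [MonoidHom.comp_apply, MonoidHom.comp_apply, hosoToCosetProduct,
      StarRelations.hosoLift_hosoGen, map_twistedGen, map_twistedGen]
    simp [twistedGen, starRoot, cosetLetter, starInr_right, ← ofAdd_zsmul, mul_div_assoc']
  exact congrArg Multiplicative.toAdd (DFunLike.congr_fun htrivial g)

/-- The degree on a hosohedral-type group, normalized so that `Δ` has degree one. -/
def hosoDegree (hℓ : ∀ j, 0 < ℓ j) : HosoGroup h m ℓ →* Multiplicative ℚ :=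
  (AddMonoidHom.snd ℤ ℚ).toMultiplicative.comp (rightHom.comp (hosoToCosetProduct hℓ))

theorem hosoDegree_hosoDelta (hℓ : ∀ j, 0 < ℓ j) (j : Fin h) :
    hosoDegree hℓ (hosoDelta h m ℓ j) = Multiplicative.ofAdd 1 := by
  rw [hosoDegree, MonoidHom.comp_apply, MonoidHom.comp_apply, hosoToCosetProduct,
    StarRelations.hosoLift_hosoDelta]
  rfl

theorem isFreeGroup_of_right_eq_one {F Q : Type*} [Group F] [IsFreeGroup F] [Group Q]
    {φ : Q →* MulAut F} {Ψ : Γ →* F ⋊[φ] Q} (hΨ : Function.Injective Ψ)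
    (hright : ∀ g, (Ψ g).right = 1) : IsFreeGroup Γ := by
  have hrange : ∀ g, Ψ g ∈ (inl : F →* F ⋊[φ] Q).range := fun g => by
    rw [range_inl_eq_ker_rightHom, MonoidHom.mem_ker]
    exact hright g
  have : IsFreeGroup (inl : F →* F ⋊[φ] Q).range :=
    IsFreeGroup.ofMulEquiv (MonoidHom.ofInjective inl_injective)
  exact isFreeGroup_of_injective (Ψ.codRestrict _ hrange) fun g g' hg =>
    hΨ (congrArg Subtype.val hg)

theorem isFreeGroup_ker_hosoDegree (hℓ : ∀ j, 0 < ℓ j) (j₀ : Fin h) :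
    IsFreeGroup (hosoDegree (m := m) hℓ).ker :=
  isFreeGroup_of_right_eq_one (Ψ := (hosoToCosetProduct hℓ).comp (Subgroup.subtype _))
    ((hosoToCosetProduct_injective hℓ j₀).comp Subtype.val_injective) fun g =>
      Multiplicative.toAdd.injective (Prod.ext (fst_hosoToCosetProduct hℓ g.1) g.2)

end Hoso

theorem roots_conjugate_hosohedral_general (h : ℕ) (m ℓ : Fin h → ℕ) (hh : 0 < h)
    (hm : ∀ j, 0 < m j) (hℓ : ∀ j, 0 < ℓ j) (α β : HosoGroup h m ℓ) (n : ℤ) (hn : n ≠ 0)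
    (hab : α ^ n = β ^ n) :
    α = β ∨ HosoIsPeriodic h m ℓ hh α ∧ HosoIsPeriodic h m ℓ hh β := by
  let N := ∏ j, m j
  let Δ := hosoDelta h m ℓ ⟨0, hh⟩
  have hN : N ≠ 0 := Finset.prod_ne_zero_iff.2 fun j _ => (hm j).ne'
  have hcenter : Δ ^ N ∈ Subgroup.center (HosoGroup h m ℓ) :=
    hosoDelta_pow_mem_center _ fun j => Finset.dvd_prod_of_mem m (Finset.mem_univ j)
  have hdegree : hosoDegree hℓ (Δ ^ N) ≠ 1 := by
    rw [map_pow, hosoDegree_hosoDelta, ← ofAdd_nsmul, nsmul_one, Ne, ofAdd_eq_one]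
    exact_mod_cast hN
  have := isFreeGroup_ker_hosoDegree (m := m) hℓ ⟨0, hh⟩
  refine (eq_or_zpow_eq_zpow_of_zpow_eq (hosoDegree hℓ) hcenter hdegree hn hab).imp_right ?_
  rintro ⟨a, ha, b, hα, hβ⟩
  rw [← zpow_natCast, ← zpow_mul] at hα hβ
  exact ⟨⟨a, ha, _, hα⟩, ⟨a, ha, _, hβ⟩⟩

/-- Uniqueness of roots up to conjugacy in hosohedral-type groups: if `α^n = β^n` for a nonzero
integer `n`, then either `α` and `β` are conjugate, or they are nonconjugate periodic
elements. -/
theorem roots_conjugate_hosohedral (h : ℕ) (m ℓ : Fin h → ℕ) (hh : 0 < h)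
    (hm : ∀ j, 0 < m j) (hℓ : ∀ j, 0 < ℓ j) (hne : ∀ j, (m j, ℓ j) ≠ (1, 1))
    (α β : HosoGroup h m ℓ) (n : ℤ) (hn : n ≠ 0) (hab : α ^ n = β ^ n) :
    IsConj α β ∨
      (HosoIsPeriodic h m ℓ hh α ∧ HosoIsPeriodic h m ℓ hh β ∧ ¬ IsConj α β) := by
  by_cases hconj : IsConj α β
  · exact Or.inl hconj
  · refine Or.inr ?_
    obtain rfl | ⟨hα, hβ⟩ := roots_conjugate_hosohedral_general h m ℓ hh hm hℓ α β n hn hab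
    · exact absurd (IsConj.refl α) hconj
    · exact ⟨hα, hβ, hconj⟩
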